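/- The parented a-graph G*_xy (the order-12 a-graph G* obtained by deleting the edge uv of the icosahedron, with the pair (x,y) of opposite boundary vertices designated) belongs to the family A*: its set of coloring states partitions under Kempe exchanges into exactly two equivalence classes, an n class consisting of 6 non-solution states (states with c(x) = c(y)) and an s class consisting of 12 solution states (states with c(x) ≠ c(y)); in particular no class contains both a solution and a non-solution state. -/

import Mathlib

open SimpleGraph

/-- A proper vertex-coloring of `G` using at most 4 colors. -/
def IsProper4Coloring {V : Type} (G : SimpleGraph V) (c : V → Fin 4) : Prop :=
  ∀ a b : V, G.Adj a b → c a ≠ c b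

/-- The degree of a vertex, as the number of its neighbours. -/
noncomputable def vdeg {V : Type} (G : SimpleGraph V) (w : V) : ℕ :=
  (G.neighborSet w).ncard

/-- A (combinatorial) planar triangulation: a connected simple graph together with its
set of triangular faces, every edge lying on exactly two faces, satisfying Euler's
formula `v - e + f = 2`. -/
structure PlanarTriangulation (V : Type) [Fintype V] [DecidableEq V] where
  graph : SimpleGraph V
  connected : graph.Connected
  faces : Finset (Finset V)
  faces_card : ∀ f ∈ faces, f.card = 3
  faces_adj : ∀ f ∈ faces, ∀ a ∈ f, ∀ b ∈ f, a ≠ b → graph.Adj a b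
  edge_faces : ∀ a b : V, graph.Adj a b →
    (faces.filter fun f => a ∈ f ∧ b ∈ f).card = 2
  euler : (Fintype.card V : ℤ) - (graph.edgeSet.ncard : ℤ) + (faces.card : ℤ) = 2

/-- An a-graph: a near-triangulation of the plane whose unique non-triangular face is a
4-face with boundary cycle `u x v y`, the pairs `(x,y)` and `(u,v)` being the two pairs
of opposite (non-adjacent) boundary vertices.  All other faces are triangles, every
edge lies on exactly two faces (boundary edges lie on one triangle and the 4-face), and
Euler's formula holds. -/
structure AGraph (V : Type) [Fintype V] [DecidableEq V] where
  graph : SimpleGraph V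
  connected : graph.Connected
  u : V
  x : V
  v : V
  y : V
  adj_ux : graph.Adj u x
  adj_xv : graph.Adj x v
  adj_vy : graph.Adj v y
  adj_yu : graph.Adj y u
  not_adj_xy : ¬ graph.Adj x y
  not_adj_uv : ¬ graph.Adj u v
  x_ne_y : x ≠ y
  u_ne_v : u ≠ v
  faces : Finset (Finset V)
  faces_card : ∀ f ∈ faces, f.card = 3
  faces_adj : ∀ f ∈ faces, ∀ a ∈ f, ∀ b ∈ f, a ≠ b → graph.Adj a b
  edge_faces : ∀ a b : V, graph.Adj a b →
    (faces.filter fun f => a ∈ f ∧ b ∈ f).card =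
      (if ({a, b} : Finset V) ∈ ({{u, x}, {x, v}, {v, y}, {y, u}} : Finset (Finset V))
        then 1 else 2)
  euler : (Fintype.card V : ℤ) - (graph.edgeSet.ncard : ℤ) + ((faces.card : ℤ) + 1) = 2

/-- A parented a-graph `G_xy` is an a-graph counterexample if in every proper
4-coloring the designated opposite boundary vertices `x` and `y` get the same color. -/
def IsACounterexample {V : Type} [Fintype V] [DecidableEq V] (G : AGraph V) : Prop :=
  ∀ c : V → Fin 4, IsProper4Coloring G.graph c → c G.x = c G.y

/-- A minimal a-graph counterexample: an a-graph counterexample such that no a-graph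
counterexample has fewer vertices. -/
def IsMinimalACounterexample {V : Type} [Fintype V] [DecidableEq V] (G : AGraph V) : Prop :=
  IsACounterexample G ∧
    ∀ (W : Type) [Fintype W] [DecidableEq W] (H : AGraph W),
      IsACounterexample H → Fintype.card V ≤ Fintype.card W

/-- A minimal counterexample to the 4-color conjecture: a planar triangulation with no
proper 4-coloring such that every planar triangulation of lower order has one. -/
def IsMinimal4CTCounterexample {V : Type} [Fintype V] [DecidableEq V]
    (T : PlanarTriangulation V) : Prop :=
  (¬ ∃ c : V → Fin 4, IsProper4Coloring T.graph c) ∧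
    ∀ (W : Type) [Fintype W] [DecidableEq W] (S : PlanarTriangulation W),
      Fintype.card W < Fintype.card V → ∃ c : W → Fin 4, IsProper4Coloring S.graph c

/-- `b` can be reached from `a` by a walk of `G` all of whose vertices lie in `S`. -/
def ReachableWithin {V : Type} (G : SimpleGraph V) (S : Set V) (a b : V) : Prop :=
  ∃ p : G.Walk a b, ∀ w ∈ p.support, w ∈ S

/-- Removing the vertex set `S` from `G` leaves a disconnected graph. -/
def RemovalDisconnects {V : Type} (G : SimpleGraph V) (S : Set V) : Prop :=
  ∃ a b : V, a ∉ S ∧ b ∉ S ∧ ¬ ReachableWithin G Sᶜ a b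

/-- `G` has a separating cycle of length `n`. -/
def HasSeparatingCycle {V : Type} (G : SimpleGraph V) (n : ℕ) : Prop :=
  ∃ (a : V) (p : G.Walk a a), p.IsCycle ∧ p.length = n ∧
    RemovalDisconnects G {w | w ∈ p.support}

/-- A planar triangulation is internally 6-connected if it has minimum degree 5, no
separating 3-cycles or 4-cycles, and whenever a separating 5-cycle is removed, at least
one of the resulting components consists of a single vertex. -/
def Internally6Connected {V : Type} [Fintype V] [DecidableEq V]
    (T : PlanarTriangulation V) : Prop :=
  (∀ w : V, 5 ≤ vdeg T.graph w) ∧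
  ¬ HasSeparatingCycle T.graph 3 ∧
  ¬ HasSeparatingCycle T.graph 4 ∧
  ∀ (a : V) (p : T.graph.Walk a a), p.IsCycle → p.length = 5 →
    RemovalDisconnects T.graph {w | w ∈ p.support} →
    ∃ z : V, z ∉ p.support ∧
      ∀ b : V, b ∉ p.support → ReachableWithin T.graph {w | w ∉ p.support} z b → b = z

/-- The graph of the parent triangulation `G + xy` of an a-graph `G`. -/
def parentXYGraph {V : Type} [Fintype V] [DecidableEq V] (G : AGraph V) : SimpleGraph V :=
  G.graph ⊔ SimpleGraph.fromEdgeSet {s(G.x, G.y)}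

/-- The graph of the parent triangulation `G + uv` of an a-graph `G`. -/
def parentUVGraph {V : Type} [Fintype V] [DecidableEq V] (G : AGraph V) : SimpleGraph V :=
  G.graph ⊔ SimpleGraph.fromEdgeSet {s(G.u, G.v)}

/-- An a-graph is internally 6a-connected if at least one of its two parent
triangulations is internally 6-connected. -/
def Internally6aConnected {V : Type} [Fintype V] [DecidableEq V] (G : AGraph V) : Prop :=
  ∃ T : PlanarTriangulation V,
    (T.graph = parentXYGraph G ∨ T.graph = parentUVGraph G) ∧ Internally6Connected T

/-- A single Kempe exchange: for some pair of distinct colors `j`, `k`, the colors `j`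
and `k` are swapped on a non-empty proper subset of the `j`-`k` Kempe chains (a
non-empty union `U` of connected components of the subgraph induced by the vertices
colored `j` or `k`, with `U` not all of them), all other vertices keeping their color. -/
def KempeStep {V : Type} (G : SimpleGraph V) (c c' : V → Fin 4) : Prop :=
  ∃ j k : Fin 4, j ≠ k ∧ ∃ U : Set V,
    U.Nonempty ∧
    U ⊆ {w | c w = j ∨ c w = k} ∧
    U ≠ {w | c w = j ∨ c w = k} ∧
    (∀ a ∈ U, ∀ b : V, ReachableWithin G {w | c w = j ∨ c w = k} a b → b ∈ U) ∧
    (∀ w ∈ U, c' w = if c w = j then k else j) ∧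
    (∀ w : V, w ∉ U → c' w = c w)

/-- The equivalence relation on colorings generated by Kempe exchanges. -/
def KempeEquiv {V : Type} (G : SimpleGraph V) : (V → Fin 4) → (V → Fin 4) → Prop :=
  Relation.EqvGen (KempeStep G)

/-- For designated vertices `x`, `y`: no Kempe equivalence class of proper 4-colorings
contains both a non-solution state (`c x = c y`) and a solution state (`c x ≠ c y`).
This is the defining property of the family `A*`. -/
def NoNSClass {V : Type} (G : SimpleGraph V) (x y : V) : Prop :=
  ∀ c c' : V → Fin 4, IsProper4Coloring G c → IsProper4Coloring G c' →
    KempeEquiv G c c' → (c x = c y ↔ c' x = c' y)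

/-- The coloring state determined by a coloring: the induced partition of the vertex
set into color classes, recorded as the relation of having equal colors.  Two colorings
represent the same state precisely when they have the same `statePart`. -/
def statePart {V : Type} (c : V → Fin 4) : V → V → Prop :=
  fun a b => c a = c b

/-- The four boundary vertices of an a-graph. -/
def boundaryFinset {V : Type} [Fintype V] [DecidableEq V] (G : AGraph V) : Finset V :=
  {G.u, G.x, G.v, G.y}

/-- The interior vertices of an a-graph: those not on the boundary 4-cycle. -/
def interiorFinset {V : Type} [Fintype V] [DecidableEq V] (G : AGraph V) : Finset V :=
  Finset.univ \ boundaryFinset G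

open Classical in
/-- The inner ring of an a-graph: the interior vertices adjacent to some boundary
vertex. -/
noncomputable def innerRingFinset {V : Type} [Fintype V] [DecidableEq V]
    (G : AGraph V) : Finset V :=
  (interiorFinset G).filter fun w => ∃ b ∈ boundaryFinset G, G.graph.Adj w b

/-- `G` belongs to the family `G(m,n)`: its inner ring has order `n` and encloses `m`
further interior vertices. -/
def InFamilyG {V : Type} [Fintype V] [DecidableEq V] (G : AGraph V) (m n : ℕ) : Prop :=
  (innerRingFinset G).card = n ∧ (interiorFinset G \ innerRingFinset G).card = m

/-- The icosahedron, the unique 5-regular planar triangulation, on 12 vertices. -/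
def icosG : SimpleGraph (Fin 12) :=
  SimpleGraph.fromEdgeSet
    {s(0, 1), s(0, 2), s(0, 3), s(0, 4), s(0, 5),
     s(1, 2), s(2, 3), s(3, 4), s(4, 5), s(5, 1),
     s(11, 6), s(11, 7), s(11, 8), s(11, 9), s(11, 10),
     s(6, 7), s(7, 8), s(8, 9), s(9, 10), s(10, 6),
     s(1, 6), s(1, 10), s(2, 6), s(2, 7), s(3, 7),
     s(3, 8), s(4, 8), s(4, 9), s(5, 9), s(5, 10)}

/-- The order-12 a-graph `G*`: the icosahedron with the edge `uv = {0,1}` deleted.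
Its boundary 4-cycle is `u x v y = 0 2 1 5`, so `(x, y) = (2, 5)` and
`(u, v) = (0, 1)` are the two pairs of opposite boundary vertices. -/
def gstarG : SimpleGraph (Fin 12) := icosG.deleteEdges {s(0, 1)}

/-- The boundary vertex `u` of `G*`. -/
def gstarU : Fin 12 := 0
/-- The boundary vertex `v` of `G*`. -/
def gstarV : Fin 12 := 1
/-- The boundary vertex `x` of `G*`. -/
def gstarX : Fin 12 := 2
/-- The boundary vertex `y` of `G*`. -/
def gstarY : Fin 12 := 5

/-!
Two ideas reduce the theorem to a finite check that is small enough to evaluate. First, a state has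
a unique representative with the colors `0`, `1`, `2` on a given triangle, and backtracking finds
18 such colorings of `G*`. Second, exchanging some of the `j`-`k` chains and then all the others
swaps the colors `j` and `k` everywhere. So a coloring in which some color admits an exchange with
each of the three others is Kempe equivalent to all its color permutations, and the classes of
colorings correspond to those of their representatives.

The representatives with `c u = c v` form a path under Kempe exchanges, one path for `c x = c y` and
one for `c x ≠ c y`, and every other representative is one exchange away from its path. The two
classes are never joined: if `c x = c y`, then `x` and `y` lie in the same `j`-`k` chain for each
pair of colors `j`, `k` containing `c x`, so no exchange separates their colors.
-/

section KempeExchange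

variable {V : Type} {G : SimpleGraph V} {c d : V → Fin 4}

theorem ReachableWithin.symm {S : Set V} {a b : V} (h : ReachableWithin G S a b) :
    ReachableWithin G S b a := by
  obtain ⟨p, hp⟩ := h
  exact ⟨p.reverse, by simpa using hp⟩

theorem forall_reachableWithin_mem_iff_forall_adj_mem {S U : Set V} (hUS : U ⊆ S) :
    (∀ a ∈ U, ∀ b, ReachableWithin G S a b → b ∈ U) ↔
      ∀ a ∈ U, ∀ b ∈ S, G.Adj a b → b ∈ U := by
  constructor
  · intro hU a ha b hb hab
    exact hU a ha b ⟨hab.toWalk, by simp [hUS ha, hb]⟩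
  · rintro hU a ha b ⟨p, hp⟩
    induction p with
    | nil => exact ha
    | cons hab p ih =>
      rw [Walk.support_cons, List.forall_mem_cons] at hp
      exact ih (hU _ ha _ (hp.2 _ p.start_mem_support) hab) hp.2

/-- `d` arises from `c` by swapping the colors `j` and `k` on a non-empty proper subset of the
`j`-`k` Kempe chains. The union of the exchanged chains is `{w | c w ≠ d w}`, and that it is a
union of chains is tested edge by edge, which makes the notion decidable on finite graphs. -/
structure IsKempeExchange (G : SimpleGraph V) (j k : Fin 4) (c d : V → Fin 4) : Prop where
  exists_ne : ∃ w, c w ≠ d w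
  exists_eq : ∃ w, c w = d w ∧ (c w = j ∨ c w = k)
  swapped : ∀ w, c w ≠ d w → c w = j ∧ d w = k ∨ c w = k ∧ d w = j
  ne_of_adj : ∀ a, c a ≠ d a → ∀ b, G.Adj a b → c b = j ∨ c b = k → c b ≠ d b

instance [Fintype V] [DecidableRel G.Adj] (j k : Fin 4) :
    Decidable (IsKempeExchange G j k c d) :=
  decidable_of_iff (_ ∧ _ ∧ _ ∧ _)
    ⟨fun ⟨hne, heq, hswap, hadj⟩ ↦ ⟨hne, heq, hswap, hadj⟩,
      fun ⟨hne, heq, hswap, hadj⟩ ↦ ⟨hne, heq, hswap, hadj⟩⟩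

theorem kempeStep_iff_exists_isKempeExchange :
    KempeStep G c d ↔ ∃ j k, IsKempeExchange G j k c d := by
  constructor
  · rintro ⟨j, k, hjk, U, ⟨w, hw⟩, hsub, hne, hclosed, hin, hout⟩
    obtain ⟨z, hz, hzU⟩ := Set.exists_of_ssubset (hsub.ssubset_of_ne hne)
    have hadj := (forall_reachableWithin_mem_iff_forall_adj_mem hsub).1 hclosed
    have mem_iff : ∀ w, w ∈ U ↔ c w ≠ d w := fun w ↦
      ⟨fun hw ↦ by grind [hsub hw], fun hw ↦ by grind⟩
    exact ⟨j, k, ⟨w, (mem_iff w).1 hw⟩, ⟨z, by grind, hz⟩,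
      fun w hw ↦ by grind [hsub ((mem_iff w).2 hw)],
      fun a ha b hab hb ↦ (mem_iff b).1 (hadj a ((mem_iff a).2 ha) b hb hab)⟩
  · rintro ⟨j, k, ⟨w, hw⟩, ⟨z, hz, hzjk⟩, hswap, hadj⟩
    have hsub : {w | c w ≠ d w} ⊆ {w | c w = j ∨ c w = k} := fun w hw ↦ by grind
    have hne : {w | c w ≠ d w} ≠ {w | c w = j ∨ c w = k} :=
      fun h ↦ (h.ge hzjk : c z ≠ d z) hz
    refine ⟨j, k, by grind, {w | c w ≠ d w}, ⟨w, hw⟩, hsub, hne, ?_, by grind, by grind⟩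
    exact (forall_reachableWithin_mem_iff_forall_adj_mem hsub).2
      fun a ha b hb hab ↦ hadj a ha b hab hb

instance [Fintype V] [DecidableRel G.Adj] : DecidableRel (KempeStep G) :=
  fun _ _ ↦ decidable_of_iff' _ kempeStep_iff_exists_isKempeExchange

theorem IsKempeExchange.symm {j k : Fin 4} (h : IsKempeExchange G j k c d) :
    IsKempeExchange G j k d c := by
  obtain ⟨⟨w, hw⟩, ⟨z, hz, hzjk⟩, hswap, hadj⟩ := h
  exact ⟨⟨w, hw.symm⟩, ⟨z, hz.symm, hz ▸ hzjk⟩, by grind, by grind⟩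

theorem IsKempeExchange.perm_comp {j k : Fin 4} (h : IsKempeExchange G j k c d)
    (σ : Equiv.Perm (Fin 4)) : IsKempeExchange G (σ j) (σ k) (σ ∘ c) (σ ∘ d) where
  exists_ne := by simpa using h.exists_ne
  exists_eq := by simpa using h.exists_eq
  swapped := by simpa using h.swapped
  ne_of_adj := by simpa using h.ne_of_adj

theorem IsKempeExchange.isProper4Coloring {j k : Fin 4} (h : IsKempeExchange G j k c d)
    (hc : IsProper4Coloring G c) : IsProper4Coloring G d := by
  intro a b hab
  have := hc a b hab
  have := h.swapped a
  have := h.swapped b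
  have := fun ha ↦ h.ne_of_adj a ha b hab
  have := fun hb ↦ h.ne_of_adj b hb a hab.symm
  grind

theorem IsKempeExchange.complement {j k : Fin 4} (h : IsKempeExchange G j k c d) :
    IsKempeExchange G j k d (Equiv.swap j k ∘ c) := by
  obtain ⟨⟨w, hw⟩, ⟨z, hz, hzjk⟩, hswap, hadj⟩ := h
  have hwjk := hswap w hw
  constructor <;> simp only [Function.comp_apply] <;> grind [G.adj_comm]

end KempeExchange

section KempeEquiv

variable {V : Type} {G : SimpleGraph V} {c d e : V → Fin 4}

theorem KempeStep.symm (h : KempeStep G c d) : KempeStep G d c := by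
  rw [kempeStep_iff_exists_isKempeExchange] at h ⊢
  exact h.imp fun _ ↦ Exists.imp fun _ ↦ IsKempeExchange.symm

theorem KempeStep.perm_comp (h : KempeStep G c d) (σ : Equiv.Perm (Fin 4)) :
    KempeStep G (σ ∘ c) (σ ∘ d) := by
  rw [kempeStep_iff_exists_isKempeExchange] at h ⊢
  obtain ⟨j, k, h⟩ := h
  exact ⟨σ j, σ k, h.perm_comp σ⟩

theorem KempeStep.isProper4Coloring (h : KempeStep G c d) (hc : IsProper4Coloring G c) :
    IsProper4Coloring G d := by
  obtain ⟨j, k, h⟩ := kempeStep_iff_exists_isKempeExchange.1 h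
  exact h.isProper4Coloring hc

theorem KempeStep.apply_eq_of_reachableWithin {x y : V} (h : KempeStep G c d) (hxy : c x = c y)
    (hchain : ∀ k ≠ c x, ReachableWithin G {w | c w = c x ∨ c w = k} x y) : d x = d y := by
  obtain ⟨j, k, hjk, U, -, hsub, -, hclosed, hin, hout⟩ := h
  have hreach : c x = j ∨ c x = k → ReachableWithin G {w | c w = j ∨ c w = k} x y := by
    rintro (rfl | rfl)
    · exact hchain k hjk.symm
    · simpa only [or_comm] using hchain j hjk
  have hmem : x ∈ U ↔ y ∈ U :=
    ⟨fun hx ↦ hclosed x hx y (hreach (hsub hx)),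
      fun hy ↦ hclosed y hy x (hreach (hxy ▸ hsub hy)).symm⟩
  by_cases hx : x ∈ U
  · rw [hin x hx, hin y (hmem.1 hx), hxy]
  · rw [hout x hx, hout y (hmem.not.1 hx), hxy]

theorem KempeStep.kempeEquiv (h : KempeStep G c d) : KempeEquiv G c d :=
  .rel _ _ h

theorem KempeEquiv.refl (c : V → Fin 4) : KempeEquiv G c c :=
  Relation.EqvGen.refl c

theorem KempeEquiv.symm (h : KempeEquiv G c d) : KempeEquiv G d c :=
  Relation.EqvGen.symm _ _ h

theorem KempeEquiv.trans (hcd : KempeEquiv G c d) (hde : KempeEquiv G d e) : KempeEquiv G c e :=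
  Relation.EqvGen.trans _ _ _ hcd hde

instance : Trans (KempeEquiv G) (KempeEquiv G) (KempeEquiv G) := ⟨KempeEquiv.trans⟩

instance : Std.Symm (KempeEquiv G) := ⟨fun _ _ ↦ KempeEquiv.symm⟩

theorem KempeEquiv.perm_comp (h : KempeEquiv G c d) (σ : Equiv.Perm (Fin 4)) :
    KempeEquiv G (σ ∘ c) (σ ∘ d) := by
  induction h with
  | rel _ _ h => exact (h.perm_comp σ).kempeEquiv
  | refl _ => exact .refl _
  | symm _ _ _ ih => exact ih.symm
  | trans _ _ _ _ _ ih₁ ih₂ => exact ih₁.trans ih₂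

theorem KempeEquiv.mul_comp {σ τ : Equiv.Perm (Fin 4)} (hσ : KempeEquiv G c (σ ∘ c))
    (hτ : KempeEquiv G c (τ ∘ c)) : KempeEquiv G c ((σ * τ : Equiv.Perm (Fin 4)) ∘ c) :=
  hσ.trans (hτ.perm_comp σ)

theorem IsKempeExchange.kempeEquiv_swap_comp {j k : Fin 4} (h : IsKempeExchange G j k c d) :
    KempeEquiv G c (Equiv.swap j k ∘ c) :=
  (kempeStep_iff_exists_isKempeExchange.2 ⟨j, k, h⟩).kempeEquiv.trans
    (kempeStep_iff_exists_isKempeExchange.2 ⟨j, k, h.complement⟩).kempeEquiv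

-- The transpositions of one color with the three others generate the symmetric group.
theorem kempeEquiv_perm_comp_of_star {j : Fin 4}
    (hstar : ∀ k ≠ j, ∃ d, IsKempeExchange G j k c d) (σ : Equiv.Perm (Fin 4)) :
    KempeEquiv G c (σ ∘ c) := by
  have swap_center : ∀ k, KempeEquiv G c (Equiv.swap j k ∘ c) := by
    intro k
    by_cases hk : k = j
    · simpa [hk] using KempeEquiv.refl c
    · obtain ⟨d, hd⟩ := hstar k hk
      exact hd.kempeEquiv_swap_comp
  induction σ using Equiv.Perm.swap_induction_on with
  | one => exact .refl c
  | swap_mul σ p q hpq ih =>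
    refine KempeEquiv.mul_comp ?_ ih
    by_cases hq : q = j
    · rw [hq, Equiv.swap_comm]
      exact swap_center p
    · rw [← Equiv.swap_mul_swap_mul_swap hq hpq.symm, Equiv.swap_comm q j]
      exact ((swap_center p).mul_comp (swap_center q)).mul_comp (swap_center p)

theorem KempeEquiv.of_perm_comp_mem {L : List (V → Fin 4)}
    (hL : ∀ m ∈ L, ∀ n ∈ L, KempeEquiv G m n)
    (hperm : ∃ r ∈ L, ∀ σ : Equiv.Perm (Fin 4), KempeEquiv G r (σ ∘ r))
    {σ τ : Equiv.Perm (Fin 4)} (hc : σ ∘ c ∈ L) (hd : τ ∘ d ∈ L) : KempeEquiv G c d := by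
  obtain ⟨r, hr, hrperm⟩ := hperm
  have root : ∀ {e : V → Fin 4} {ρ : Equiv.Perm (Fin 4)}, ρ ∘ e ∈ L → KempeEquiv G r e := by
    intro e ρ he
    have := (hrperm ρ⁻¹).trans ((hL r hr _ he).perm_comp ρ⁻¹)
    rwa [← Function.comp_assoc, ← Equiv.Perm.coe_mul, inv_mul_cancel, Equiv.Perm.coe_one,
      Function.id_comp] at this
  exact (root hc).symm.trans (root hd)

theorem KempeEquiv.of_mem_hubs_append_leaves {hubs leaves : List (V → Fin 4)}
    (hhubs : hubs.IsChain (KempeStep G)) (hleaves : ∀ d ∈ leaves, ∃ c ∈ hubs, KempeStep G c d) :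
    ∀ m ∈ hubs ++ leaves, ∀ n ∈ hubs ++ leaves, KempeEquiv G m n := by
  have hub_equiv : ∀ m ∈ hubs, ∀ n ∈ hubs, KempeEquiv G m n :=
    (hhubs.imp fun _ _ ↦ KempeStep.kempeEquiv).pairwise.forall_of_forall fun m _ ↦ .refl m
  have exists_hub : ∀ m ∈ hubs ++ leaves, ∃ c ∈ hubs, KempeEquiv G c m := by
    intro m hm
    rcases List.mem_append.1 hm with hm | hm
    · exact ⟨m, hm, .refl m⟩
    · exact (hleaves m hm).imp fun _ ↦ And.imp_right KempeStep.kempeEquiv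
  intro m hm n hn
  obtain ⟨c, hc, hcm⟩ := exists_hub m hm
  obtain ⟨d, hd, hdn⟩ := exists_hub n hn
  exact hcm.symm.trans ((hub_equiv c hc d hd).trans hdn)

theorem noNSClass_of_forall_kempeStep {x y : V}
    (hstep : ∀ c d, IsProper4Coloring G c → c x = c y → KempeStep G c d → d x = d y) :
    NoNSClass G x y := by
  have invariant : ∀ c d, KempeEquiv G c d →
      (IsProper4Coloring G c ∧ c x = c y ↔ IsProper4Coloring G d ∧ d x = d y) := by
    intro c d h
    induction h with
    | rel c d h =>
      exact ⟨fun ⟨hc, hxy⟩ ↦ ⟨h.isProper4Coloring hc, hstep c d hc hxy h⟩,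
        fun ⟨hd, hxy⟩ ↦ ⟨h.symm.isProper4Coloring hd, hstep d c hd hxy h.symm⟩⟩
    | refl _ => exact Iff.rfl
    | symm _ _ _ ih => exact ih.symm
    | trans _ _ _ _ _ ih₁ ih₂ => exact ih₁.trans ih₂
  intro c d hc hd h
  simpa only [hc, hd, true_and] using invariant c d h

end KempeEquiv

section Normalization

variable {V : Type} {G : SimpleGraph V} {c : V → Fin 4}

theorem IsProper4Coloring.perm_comp (hc : IsProper4Coloring G c) (σ : Equiv.Perm (Fin 4)) :
    IsProper4Coloring G (σ ∘ c) :=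
  fun a b hab h ↦ hc a b hab (σ.injective h)

theorem statePart_perm_comp (c : V → Fin 4) (σ : Equiv.Perm (Fin 4)) :
    statePart (σ ∘ c) = statePart c := by
  funext a b
  simp [statePart]

/-- `c` has the colors `0`, `1`, `2` on `p`, `q`, `r`. If `p`, `q`, `r` span a triangle, each
state has exactly one such representative. -/
def IsNormalizedOn (p q r : V) (c : V → Fin 4) : Prop :=
  c p = 0 ∧ c q = 1 ∧ c r = 2

theorem exists_perm_comp_isNormalizedOn {p q r : V} (hpq : c p ≠ c q) (hpr : c p ≠ c r)
    (hqr : c q ≠ c r) : ∃ σ : Equiv.Perm (Fin 4), IsNormalizedOn p q r (σ ∘ c) := by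
  have sorting : ∀ i j k : Fin 4, i ≠ j → i ≠ k → j ≠ k →
      ∃ σ : Equiv.Perm (Fin 4), σ i = 0 ∧ σ j = 1 ∧ σ k = 2 := by decide +kernel
  exact sorting _ _ _ hpq hpr hqr

-- The fourth color class is the complement of the classes of `p`, `q` and `r`.
theorem injOn_statePart_isNormalizedOn (p q r : V) :
    Set.InjOn statePart {c : V → Fin 4 | IsNormalizedOn p q r c} := by
  rintro c ⟨hcp, hcq, hcr⟩ d ⟨hdp, hdq, hdr⟩ h
  have same_class : ∀ a b, c a = c b ↔ d a = d b := fun a b ↦ iff_of_eq (congrFun₂ h a b)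
  funext w
  have := same_class w p
  have := same_class w q
  have := same_class w r
  grind

theorem ncard_image_statePart {A : Set (V → Fin 4)} {p q r : V}
    (hA : ∀ c ∈ A, c p ≠ c q ∧ c p ≠ c r ∧ c q ≠ c r)
    (hperm : ∀ c ∈ A, ∀ σ : Equiv.Perm (Fin 4), σ ∘ c ∈ A) :
    (statePart '' A).ncard = {c ∈ A | IsNormalizedOn p q r c}.ncard := by
  have himage : statePart '' A = statePart '' {c ∈ A | IsNormalizedOn p q r c} := by
    refine (Set.image_mono fun c hc ↦ hc.1).antisymm' ?_
    rintro _ ⟨c, hc, rfl⟩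
    obtain ⟨hpq, hpr, hqr⟩ := hA c hc
    obtain ⟨σ, hσ⟩ := exists_perm_comp_isNormalizedOn hpq hpr hqr
    exact ⟨σ ∘ c, ⟨hperm c hc σ, hσ⟩, statePart_perm_comp c σ⟩
  rw [himage, Set.InjOn.ncard_image]
  exact (injOn_statePart_isNormalizedOn p q r).mono fun c hc ↦ hc.2

end Normalization

section Backtracking

variable {V : Type} [DecidableEq V] (G : SimpleGraph V) [DecidableRel G.Adj]

/-- The colorings obtained from `c` by recoloring the vertices in `todo` one after the other, each
time avoiding the colors of the neighbors in `done` and of those recolored before. -/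
def recolorings : (todo done : List V) → (c : V → Fin 4) → List (V → Fin 4)
  | [], _, c => [c]
  | v :: todo, done, c =>
    ((List.finRange 4).filter fun k ↦ ∀ w ∈ done, G.Adj v w → k ≠ c w).flatMap fun k ↦
      recolorings todo (v :: done) (Function.update c v k)

variable {G}

theorem IsProper4Coloring.mem_recolorings {d : V → Fin 4} (hd : IsProper4Coloring G d)
    (todo done : List V) (c : V → Fin 4) (hcover : ∀ w, w ∈ todo ∨ w ∈ done)
    (hagree : ∀ w ∈ done, c w = d w) : d ∈ recolorings G todo done c := by
  induction todo generalizing done c with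
  | nil =>
    rw [recolorings, List.mem_singleton]
    exact funext fun w ↦ (hagree w (by simpa using hcover w)).symm
  | cons v todo ih =>
    simp only [recolorings, List.mem_flatMap, List.mem_filter, List.mem_finRange, true_and,
      decide_eq_true_eq]
    refine ⟨d v, fun w hw hvw ↦ hagree w hw ▸ hd v w hvw, ih _ _ (by grind) fun w hw ↦ ?_⟩
    rw [Function.update_apply]
    split_ifs with hwv
    · rw [hwv]
    · exact hagree w (by grind)

end Backtracking

section States

variable {V : Type} {G : SimpleGraph V} {x y : V} {c : V → Fin 4}

/-- The proper colorings that represent non-solution states of `G` with respect to `x` and `y`. -/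
def nonSolutionColorings (G : SimpleGraph V) (x y : V) : Set (V → Fin 4) :=
  {c | IsProper4Coloring G c ∧ c x = c y}

/-- The proper colorings that represent solution states of `G` with respect to `x` and `y`. -/
def solutionColorings (G : SimpleGraph V) (x y : V) : Set (V → Fin 4) :=
  {c | IsProper4Coloring G c ∧ c x ≠ c y}

theorem perm_comp_mem_nonSolutionColorings (hc : c ∈ nonSolutionColorings G x y)
    (σ : Equiv.Perm (Fin 4)) : σ ∘ c ∈ nonSolutionColorings G x y :=
  ⟨hc.1.perm_comp σ, congrArg σ hc.2⟩

theorem perm_comp_mem_solutionColorings (hc : c ∈ solutionColorings G x y)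
    (σ : Equiv.Perm (Fin 4)) : σ ∘ c ∈ solutionColorings G x y :=
  ⟨hc.1.perm_comp σ, σ.injective.ne hc.2⟩

end States

section Gstar

/-- The neighbors of each vertex of `G*`, in increasing order: a lookup table that makes adjacency
quick to decide by evaluation. -/
def gstarNeighbors : Fin 12 → List (Fin 12) :=
  ![[2, 3, 4, 5], [2, 5, 6, 10], [0, 1, 3, 6, 7], [0, 2, 4, 7, 8], [0, 3, 5, 8, 9],
    [0, 1, 4, 9, 10], [1, 2, 7, 10, 11], [2, 3, 6, 8, 11], [3, 4, 7, 9, 11],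
    [4, 5, 8, 10, 11], [1, 5, 6, 9, 11], [6, 7, 8, 9, 10]]

theorem gstarG_adj_iff_mem_gstarNeighbors (a b : Fin 12) :
    gstarG.Adj a b ↔ b ∈ gstarNeighbors a := by
  simp only [gstarG, icosG, deleteEdges_adj, fromEdgeSet_adj, Set.mem_insert_iff,
    Set.mem_singleton_iff]
  decide +revert +kernel

instance : DecidableRel gstarG.Adj := fun a b ↦
  decidable_of_iff' _ (gstarG_adj_iff_mem_gstarNeighbors a b)

/-- The colorings of `G*` normalized on the triangle `0 2 3` with `c x = c y` and `c u = c v`. -/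
def nonSolutionHubs : List (Fin 12 → Fin 4) :=
  [![0, 0, 1, 2, 3, 1, 2, 3, 0, 2, 3, 1],
   ![0, 0, 1, 2, 3, 1, 2, 3, 1, 2, 3, 0]]

/-- The colorings of `G*` normalized on the triangle `0 2 3` with `c x = c y` and `c u ≠ c v`, each
one Kempe exchange away from a hub. -/
def nonSolutionLeaves : List (Fin 12 → Fin 4) :=
  [![0, 2, 1, 2, 3, 1, 0, 3, 0, 2, 3, 1],
   ![0, 2, 1, 2, 3, 1, 0, 3, 1, 0, 3, 2],
   ![0, 3, 1, 2, 3, 1, 2, 0, 1, 2, 0, 3],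
   ![0, 3, 1, 2, 3, 1, 2, 3, 0, 2, 0, 1]]

/-- The colorings of `G*` normalized on the triangle `0 2 3` with `c x ≠ c y` and `c u = c v`,
ordered so that consecutive ones differ by a Kempe exchange. -/
def solutionHubs : List (Fin 12 → Fin 4) :=
  [![0, 0, 1, 2, 1, 2, 2, 0, 3, 0, 3, 1],
   ![0, 0, 1, 2, 1, 3, 3, 0, 3, 0, 2, 1],
   ![0, 0, 1, 2, 1, 3, 3, 0, 3, 0, 1, 2],
   ![0, 0, 1, 2, 1, 2, 3, 0, 3, 0, 1, 2],
   ![0, 0, 1, 2, 3, 2, 3, 0, 1, 0, 1, 2],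
   ![0, 0, 1, 2, 3, 2, 2, 0, 1, 0, 1, 3]]

/-- The colorings of `G*` normalized on the triangle `0 2 3` with `c x ≠ c y` and `c u ≠ c v`, each
one Kempe exchange away from a hub. -/
def solutionLeaves : List (Fin 12 → Fin 4) :=
  [![0, 3, 1, 2, 1, 2, 2, 3, 0, 3, 0, 1],
   ![0, 2, 1, 2, 1, 3, 3, 0, 3, 2, 0, 1],
   ![0, 2, 1, 2, 1, 3, 3, 0, 3, 0, 1, 2],
   ![0, 3, 1, 2, 1, 2, 0, 3, 0, 3, 1, 2],
   ![0, 3, 1, 2, 3, 2, 0, 3, 1, 0, 1, 2],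
   ![0, 3, 1, 2, 3, 2, 2, 0, 1, 0, 1, 3]]

/-- One coloring of `G*` for each non-solution state. -/
def nonSolutionReps : List (Fin 12 → Fin 4) :=
  nonSolutionHubs ++ nonSolutionLeaves

/-- One coloring of `G*` for each solution state. -/
def solutionReps : List (Fin 12 → Fin 4) :=
  solutionHubs ++ solutionLeaves

-- These take precedence over the default instances, which would run through all `4 ^ 12` functions.
local instance {α : Type} (p : α → Prop) [DecidablePred p] (L : List α) :
    Decidable (∀ c ∈ L, p c) :=
  List.decidableBAll p L

local instance {α : Type} (p : α → Prop) [DecidablePred p] (L : List α) :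
    Decidable (∃ c ∈ L, p c) :=
  List.decidableBEx p L

variable {c d : Fin 12 → Fin 4}

theorem IsProper4Coloring.mem_nonSolutionReps_append_solutionReps
    (hc : IsProper4Coloring gstarG c) (hnorm : IsNormalizedOn 0 2 3 c) :
    c ∈ nonSolutionReps ++ solutionReps := by
  have enumeration : recolorings gstarG [4, 7, 8, 5, 9, 6, 11, 10, 1] [0, 2, 3]
      ![0, 0, 1, 2, 0, 0, 0, 0, 0, 0, 0, 0] ⊆ nonSolutionReps ++ solutionReps := by
    decide +kernel
  refine enumeration (hc.mem_recolorings _ _ _ (by decide) ?_)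
  obtain ⟨h0, h2, h3⟩ := hnorm
  simp [h0, h2, h3]

theorem isProper4Coloring_and_isNormalizedOn_of_mem_reps :
    ∀ c ∈ nonSolutionReps ++ solutionReps,
      IsProper4Coloring gstarG c ∧ IsNormalizedOn 0 2 3 c := by
  unfold IsProper4Coloring IsNormalizedOn
  decide +kernel

theorem apply_gstarX_eq_of_mem_nonSolutionReps : ∀ c ∈ nonSolutionReps, c gstarX = c gstarY := by
  decide +kernel

theorem apply_gstarX_ne_of_mem_solutionReps : ∀ c ∈ solutionReps, c gstarX ≠ c gstarY := by
  decide +kernel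

theorem mem_nonSolutionReps_iff :
    c ∈ nonSolutionReps ↔
      c ∈ nonSolutionColorings gstarG gstarX gstarY ∧ IsNormalizedOn 0 2 3 c := by
  constructor
  · intro hc
    obtain ⟨hproper, hnorm⟩ :=
      isProper4Coloring_and_isNormalizedOn_of_mem_reps c (List.mem_append_left _ hc)
    exact ⟨⟨hproper, apply_gstarX_eq_of_mem_nonSolutionReps c hc⟩, hnorm⟩
  · rintro ⟨⟨hproper, hxy⟩, hnorm⟩
    exact (List.mem_append.1 (hproper.mem_nonSolutionReps_append_solutionReps hnorm)).resolve_right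
      fun hc ↦ apply_gstarX_ne_of_mem_solutionReps c hc hxy

theorem mem_solutionReps_iff :
    c ∈ solutionReps ↔
      c ∈ solutionColorings gstarG gstarX gstarY ∧ IsNormalizedOn 0 2 3 c := by
  constructor
  · intro hc
    obtain ⟨hproper, hnorm⟩ :=
      isProper4Coloring_and_isNormalizedOn_of_mem_reps c (List.mem_append_right _ hc)
    exact ⟨⟨hproper, apply_gstarX_ne_of_mem_solutionReps c hc⟩, hnorm⟩
  · rintro ⟨⟨hproper, hxy⟩, hnorm⟩
    exact (List.mem_append.1 (hproper.mem_nonSolutionReps_append_solutionReps hnorm)).resolve_left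
      fun hc ↦ hxy (apply_gstarX_eq_of_mem_nonSolutionReps c hc)

theorem IsProper4Coloring.pairwise_ne_of_gstarG (hc : IsProper4Coloring gstarG c) :
    c 0 ≠ c 2 ∧ c 0 ≠ c 3 ∧ c 2 ≠ c 3 :=
  ⟨hc 0 2 (by decide), hc 0 3 (by decide), hc 2 3 (by decide)⟩

theorem exists_perm_comp_mem_nonSolutionReps
    (hc : c ∈ nonSolutionColorings gstarG gstarX gstarY) :
    ∃ σ : Equiv.Perm (Fin 4), σ ∘ c ∈ nonSolutionReps := by
  obtain ⟨h02, h03, h23⟩ := hc.1.pairwise_ne_of_gstarG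
  exact (exists_perm_comp_isNormalizedOn h02 h03 h23).imp fun σ hσ ↦
    mem_nonSolutionReps_iff.2 ⟨perm_comp_mem_nonSolutionColorings hc σ, hσ⟩

theorem exists_perm_comp_mem_solutionReps (hc : c ∈ solutionColorings gstarG gstarX gstarY) :
    ∃ σ : Equiv.Perm (Fin 4), σ ∘ c ∈ solutionReps := by
  obtain ⟨h02, h03, h23⟩ := hc.1.pairwise_ne_of_gstarG
  exact (exists_perm_comp_isNormalizedOn h02 h03 h23).imp fun σ hσ ↦
    mem_solutionReps_iff.2 ⟨perm_comp_mem_solutionColorings hc σ, hσ⟩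

theorem ncard_statePart_image_nonSolutionColorings :
    (statePart '' nonSolutionColorings gstarG gstarX gstarY).ncard = 6 := by
  have nodup : nonSolutionReps.Nodup := by decide +kernel
  rw [ncard_image_statePart (fun c hc ↦ hc.1.pairwise_ne_of_gstarG)
    fun c hc ↦ perm_comp_mem_nonSolutionColorings hc]
  simp only [← mem_nonSolutionReps_iff]
  rw [← List.coe_toFinset, Set.ncard_coe_finset, List.toFinset_card_of_nodup nodup]
  rfl

theorem ncard_statePart_image_solutionColorings :
    (statePart '' solutionColorings gstarG gstarX gstarY).ncard = 12 := by
  have nodup : solutionReps.Nodup := by decide +kernel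
  rw [ncard_image_statePart (fun c hc ↦ hc.1.pairwise_ne_of_gstarG)
    fun c hc ↦ perm_comp_mem_solutionColorings hc]
  simp only [← mem_solutionReps_iff]
  rw [← List.coe_toFinset, Set.ncard_coe_finset, List.toFinset_card_of_nodup nodup]
  rfl

theorem kempeEquiv_of_mem_nonSolutionColorings
    (hc : c ∈ nonSolutionColorings gstarG gstarX gstarY)
    (hd : d ∈ nonSolutionColorings gstarG gstarX gstarY) : KempeEquiv gstarG c d := by
  have hubs_isChain : nonSolutionHubs.IsChain (KempeStep gstarG) := by decide +kernel
  have leaves_attached : ∀ d ∈ nonSolutionLeaves, ∃ c ∈ nonSolutionHubs, KempeStep gstarG c d := by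
    decide +kernel
  have star : ∃ r ∈ nonSolutionReps, ∃ j, ∀ k ≠ j, ∃ d ∈ nonSolutionReps,
      IsKempeExchange gstarG j k r d := by decide +kernel
  obtain ⟨r, hr, j, hstar⟩ := star
  obtain ⟨σ, hσ⟩ := exists_perm_comp_mem_nonSolutionReps hc
  obtain ⟨τ, hτ⟩ := exists_perm_comp_mem_nonSolutionReps hd
  exact .of_perm_comp_mem (.of_mem_hubs_append_leaves hubs_isChain leaves_attached)
    ⟨r, hr, kempeEquiv_perm_comp_of_star fun k hk ↦ (hstar k hk).imp fun _ ↦ And.right⟩ hσ hτ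

theorem kempeEquiv_of_mem_solutionColorings
    (hc : c ∈ solutionColorings gstarG gstarX gstarY)
    (hd : d ∈ solutionColorings gstarG gstarX gstarY) : KempeEquiv gstarG c d := by
  have hubs_isChain : solutionHubs.IsChain (KempeStep gstarG) := by decide +kernel
  have leaves_attached : ∀ d ∈ solutionLeaves, ∃ c ∈ solutionHubs, KempeStep gstarG c d := by
    decide +kernel
  have star : ∃ r ∈ solutionReps, ∃ j, ∀ k ≠ j, ∃ d ∈ solutionReps,
      IsKempeExchange gstarG j k r d := by decide +kernel
  obtain ⟨r, hr, j, hstar⟩ := star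
  obtain ⟨σ, hσ⟩ := exists_perm_comp_mem_solutionReps hc
  obtain ⟨τ, hτ⟩ := exists_perm_comp_mem_solutionReps hd
  exact .of_perm_comp_mem (.of_mem_hubs_append_leaves hubs_isChain leaves_attached)
    ⟨r, hr, kempeEquiv_perm_comp_of_star fun k hk ↦ (hstar k hk).imp fun _ ↦ And.right⟩ hσ hτ

theorem reachableWithin_of_mem_nonSolutionColorings
    (hc : c ∈ nonSolutionColorings gstarG gstarX gstarY) {k : Fin 4} (hk : k ≠ c gstarX) :
    ReachableWithin gstarG {w | c w = c gstarX ∨ c w = k} gstarX gstarY := by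
  have alternating_path : ∀ r ∈ nonSolutionReps, ∀ k ≠ r gstarX,
      ∃ a₁, gstarG.Adj gstarX a₁ ∧ r a₁ = k ∧ ∃ a₂, gstarG.Adj a₁ a₂ ∧ r a₂ = r gstarX ∧
        ∃ a₃, gstarG.Adj a₂ a₃ ∧ r a₃ = k ∧ gstarG.Adj a₃ gstarY := by decide +kernel
  obtain ⟨σ, hσ⟩ := exists_perm_comp_mem_nonSolutionReps hc
  obtain ⟨a₁, hx1, h1, a₂, h12, h2, a₃, h23, h3, h3y⟩ :=
    alternating_path _ hσ (σ k) (σ.injective.ne hk)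
  refine ⟨.cons hx1 (.cons h12 (.cons h23 h3y.toWalk)), ?_⟩
  simp [σ.injective h1, σ.injective h2, σ.injective h3, hc.2.symm]

theorem noNSClass_gstarG : NoNSClass gstarG gstarX gstarY :=
  noNSClass_of_forall_kempeStep fun _ _ hc hxy hstep ↦
    hstep.apply_eq_of_reachableWithin hxy fun _ hk ↦
      reachableWithin_of_mem_nonSolutionColorings ⟨hc, hxy⟩ hk

end Gstar

/-- The parented a-graph `G*_xy` (icosahedron minus the edge `uv`, with
the pair `(x, y) = (2, 5)` designated) belongs to `A*`: its coloring states split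
under Kempe exchanges into exactly two classes, an `n` class of 6 non-solution states
and an `s` class of 12 solution states. -/
theorem stmt_14 :
    (∃ A B : Set (Fin 12 → Fin 4),
      (∀ c ∈ A, IsProper4Coloring gstarG c) ∧
      (∀ c ∈ B, IsProper4Coloring gstarG c) ∧
      (∀ c : Fin 12 → Fin 4, IsProper4Coloring gstarG c → c ∈ A ∨ c ∈ B) ∧
      (∀ c ∈ A, c ∉ B) ∧
      (∀ c ∈ A, ∀ c' ∈ A, KempeEquiv gstarG c c') ∧
      (∀ c ∈ B, ∀ c' ∈ B, KempeEquiv gstarG c c') ∧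
      (∀ c ∈ A, ∀ c' ∈ B, ¬ KempeEquiv gstarG c c') ∧
      (∀ c ∈ A, c gstarX = c gstarY) ∧
      (∀ c ∈ B, c gstarX ≠ c gstarY) ∧
      (statePart '' A).ncard = 6 ∧
      (statePart '' B).ncard = 12) ∧
    NoNSClass gstarG gstarX gstarY := by
  refine ⟨⟨nonSolutionColorings gstarG gstarX gstarY, solutionColorings gstarG gstarX gstarY,
    fun c hc ↦ hc.1, fun c hc ↦ hc.1, fun c hc ↦ ?_, fun c hcA hcB ↦ hcB.2 hcA.2,
    fun c hc d hd ↦ kempeEquiv_of_mem_nonSolutionColorings hc hd,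
    fun c hc d hd ↦ kempeEquiv_of_mem_solutionColorings hc hd,
    fun c hc d hd hcd ↦ hd.2 ((noNSClass_gstarG c d hc.1 hd.1 hcd).1 hc.2),
    fun c hc ↦ hc.2, fun c hc ↦ hc.2, ncard_statePart_image_nonSolutionColorings,
    ncard_statePart_image_solutionColorings⟩, noNSClass_gstarG⟩
  exact (eq_or_ne (c gstarX) (c gstarY)).imp (.intro hc) (.intro hc)
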